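/- Fix real exponents q, p, r, γ with 1 < q < p < r and 0 < γ < 1, and constants c₈ > 0, c₉ > 0. Then there exists λ₀ > 0 such that for every λ ∈ (0, λ₀]: whenever reals A > 0, B ≥ 0, C > 0, D ≥ 0 satisfy the Nehari identity A + D = B + λ·C, the N⁻ condition (p+γ−1)·A + (q+γ−1)·D < λ·(r+γ−1)·C, and the bounds A ≥ c₈·C^{p/r} and B ≤ c₉·C^{(1−γ)/r}, one has A/p + D/q − B/(1−γ) − λ·C/r ≥ 0. (Abstract form of Proposition 9: the energy functional is nonnegative on N_λ⁻ for all small λ > 0.) -/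

import Mathlib

open Real

/-! On the Nehari manifold the energy equals
`(1/p - 1/r) A + (1/q - 1/r) D - (1/(1-γ) - 1/r) B`, so only the `B` term can make it negative.
The Sobolev bound and the `N⁻` condition give `(p+γ-1) c₈ < λ (r+γ-1) C^(1 - p/r)`, which forces
`C` to be large when `λ` is small. For large `C` the lower bound `C^(p/r)` on `A` beats the upper
bound `C^((1-γ)/r)` on `B`, because `1 - γ < p`. -/

open Filter in
theorem eventually_mul_rpow_le_mul_rpow (a : ℝ) {b s t : ℝ} (hb : 0 < b) (hst : s < t) :
    ∀ᶠ x : ℝ in atTop, a * x ^ s ≤ b * x ^ t := by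
  have h_gap : ∀ᶠ x : ℝ in atTop, a / b ≤ x ^ (t - s) :=
    (tendsto_rpow_atTop (sub_pos.2 hst)).eventually_ge_atTop (a / b)
  filter_upwards [h_gap, eventually_gt_atTop 0] with x hx hx0
  calc a * x ^ s ≤ b * x ^ (t - s) * x ^ s := by
        gcongr
        exact (div_le_iff₀' hb).1 hx
    _ = b * x ^ t := by rw [mul_assoc, ← rpow_add hx0, sub_add_cancel]

theorem mul_lt_mul_rpow_one_sub {a c e m A C : ℝ} (ha : 0 ≤ a) (hC : 0 < C)
    (hA : c * C ^ e ≤ A) (h : a * A < m * C) : a * c < m * C ^ (1 - e) := by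
  have hCe : 0 < C ^ e := rpow_pos_of_pos hC e
  refine lt_of_mul_lt_mul_right ?_ hCe.le
  calc a * c * C ^ e = a * (c * C ^ e) := mul_assoc _ _ _
    _ ≤ a * A := by gcongr
    _ < m * C := h
    _ = m * C ^ (1 - e) * C ^ e := by
      rw [mul_assoc, ← rpow_add hC, sub_add_cancel, rpow_one]

theorem exists_pos_forall_le_lt_of_mul_lt {a b c e K : ℝ} (ha : 0 < a) (hb : 0 < b)
    (hc : 0 < c) (he : e < 1) (hK : 0 < K) :
    ∃ lam₀ > 0, ∀ lam ≤ lam₀, ∀ A C : ℝ, 0 < C → c * C ^ e ≤ A → a * A < lam * (b * C) →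
      K < C := by
  refine ⟨a * c / (b * K ^ (1 - e)), by positivity, fun lam hlam A C hC hA h ↦ ?_⟩
  have h_lower : a * c < lam * b * C ^ (1 - e) :=
    mul_lt_mul_rpow_one_sub ha.le hC hA (by rwa [mul_assoc])
  by_contra! hCK
  refine h_lower.not_ge ?_
  calc lam * b * C ^ (1 - e) ≤ a * c / (b * K ^ (1 - e)) * b * K ^ (1 - e) := by
        gcongr
    _ = a * c := by field_simp

theorem energy_eq_of_nehari {lam A B C D : ℝ} (p q r s : ℝ) (h : A + D = B + lam * C) :
    A / p + D / q - B / s - lam * C / r =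
      (1 / p - 1 / r) * A + (1 / q - 1 / r) * D - (1 / s - 1 / r) * B := by
  rw [← sub_eq_of_eq_add' h]
  ring

theorem energy_nonneg_on_Nminus_general (q p r γ c₈ c₉ : ℝ)
    (hγ : γ < 1) (hγq : 1 - γ ≤ q) (hqr : q ≤ r) (hγp : 1 - γ < p) (hpr : p < r)
    (hc₈ : 0 < c₈) :
    ∃ lam₀ > 0, ∀ lam ≤ lam₀, ∀ A B C D : ℝ, 0 < C → 0 ≤ D →
      A + D = B + lam * C →
      (p + γ - 1) * A + (q + γ - 1) * D < lam * ((r + γ - 1) * C) →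
      c₈ * C ^ (p / r) ≤ A →
      B ≤ c₉ * C ^ ((1 - γ) / r) →
      0 ≤ A / p + D / q - B / (1 - γ) - lam * C / r := by
  have hs : 0 < 1 - γ := sub_pos.2 hγ
  have hp : 0 < p := hs.trans hγp
  have hr : 0 < r := hp.trans hpr
  have hkA : 0 < 1 / p - 1 / r := sub_pos.2 (one_div_lt_one_div_of_lt hp hpr)
  have hkD : 0 ≤ 1 / q - 1 / r := sub_nonneg.2 (one_div_le_one_div_of_le (hs.trans_le hγq) hqr)
  have hkB : 0 ≤ 1 / (1 - γ) - 1 / r :=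
    sub_nonneg.2 (one_div_le_one_div_of_le hs (hγq.trans hqr))
  have h_dom := eventually_mul_rpow_le_mul_rpow ((1 / (1 - γ) - 1 / r) * c₉)
    (mul_pos hkA hc₈) (div_lt_div_of_pos_right hγp hr)
  obtain ⟨K, hK⟩ := (h_dom.and (Filter.eventually_gt_atTop 0)).exists_forall_of_atTop
  obtain ⟨lam₀, hlam₀, h_large⟩ := exists_pos_forall_le_lt_of_mul_lt
    (a := p + γ - 1) (b := r + γ - 1) (by linarith) (by linarith) hc₈
    ((div_lt_one hr).2 hpr) (hK K le_rfl).2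
  refine ⟨lam₀, hlam₀, fun lam hlam A B C D hC hD hNehari hNminus hA hB ↦ ?_⟩
  have hD_term : 0 ≤ (q + γ - 1) * D := mul_nonneg (by linarith) hD
  have hKC : K < C := h_large lam hlam A C hC hA (by linarith)
  have hBA : (1 / (1 - γ) - 1 / r) * B ≤ (1 / p - 1 / r) * A :=
    calc (1 / (1 - γ) - 1 / r) * B ≤ (1 / (1 - γ) - 1 / r) * (c₉ * C ^ ((1 - γ) / r)) := by gcongr
      _ ≤ (1 / p - 1 / r) * (c₈ * C ^ (p / r)) := by
        simpa only [mul_assoc] using (hK C hKC.le).1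
      _ ≤ (1 / p - 1 / r) * A := by gcongr
  rw [energy_eq_of_nehari p q r (1 - γ) hNehari]
  linarith [mul_nonneg hkD hD]

/-- Abstract form of Proposition 9: the energy functional is nonnegative on
`N_λ⁻` for all small `λ > 0`. -/
theorem energy_nonneg_on_Nminus (q p r γ c₈ c₉ : ℝ)
    (hq : 1 < q) (hqp : q < p) (hpr : p < r)
    (hγ0 : 0 < γ) (hγ1 : γ < 1) (hc₈ : 0 < c₈) (hc₉ : 0 < c₉) :
    ∃ lam₀ > 0, ∀ lam : ℝ, 0 < lam → lam ≤ lam₀ →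
      ∀ A B C D : ℝ, 0 < A → 0 ≤ B → 0 < C → 0 ≤ D →
        A + D = B + lam * C →
        (p + γ - 1) * A + (q + γ - 1) * D < lam * ((r + γ - 1) * C) →
        c₈ * C ^ (p / r) ≤ A →
        B ≤ c₉ * C ^ ((1 - γ) / r) →
        0 ≤ A / p + D / q - B / (1 - γ) - lam * C / r := by
  obtain ⟨lam₀, hlam₀, h⟩ := energy_nonneg_on_Nminus_general q p r γ c₈ c₉ hγ1
    (by linarith) (by linarith) (by linarith) hpr hc₈
  exact ⟨lam₀, hlam₀, fun lam _ hlam A B C D _ _ ↦ h lam hlam A B C D⟩
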